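/- Let d, p ∈ ℕ, q ≥ 1, Ξ := {u ∈ [0,∞)^d : ‖u‖_q = 1}, and for b ∈ Ξ^p and u ∈ [0,∞)^d let f_b(u) := inf_{c ∈ [0,∞)^p} Σ_{i=1}^d |u_i − max_{1≤k≤p} c_k·b_{ik}|. Let S_n (n ∈ ℕ) and S be finite Borel measures on Ξ with S_n → S weakly, and for each n let b_n ∈ Ξ^p be a minimizer of b ↦ ∫_Ξ f_b(u) S_n(du) over Ξ^p. If a subsequence (b_{n_i}) converges to b_∞ ∈ Ξ^p, then b_∞ is a minimizer of b ↦ ∫_Ξ f_b(u) S(du) over Ξ^p; moreover ∫_Ξ f_{b_{n_i}}(u) S_{n_i}(du) → ∫_Ξ f_{b_∞}(u) S(du). -/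

import Mathlib

open MeasureTheory Filter Topology
open scoped NNReal

/-!
Where every `b k` has a positive coordinate, the max-times combinations which approximate `u` at
least as well as `0` have coefficients bounded locally uniformly in `(b, u)`. Near such a point the
infimum defining the max-times distance is therefore taken over a fixed compact box, so the distance
is jointly continuous in `(b, u)`. On the compact spectral sphere `K` joint continuity gives
`f_{b'} → f_b` uniformly on `K` as `b' → b`; together with the weak convergence `μ → ν` this yields
`∫ f_{b'} dμ → ∫ f_b dν`, and minimality passes to the limit.
-/

section Infimum

variable {X β R : Type*} [TopologicalSpace X] [TopologicalSpace β]
  [ConditionallyCompleteLinearOrder R] [TopologicalSpace R] [OrderTopology R]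

theorem iInf_eq_sInf_image_of_isCompact {g : β → R} {K : Set β} (hK : IsCompact K)
    (hg : ContinuousOn g K) {c₀ : β} (hc₀ : c₀ ∈ K) (h : ∀ c, g c ≤ g c₀ → c ∈ K) :
    ⨅ c, g c = sInf (g '' K) := by
  obtain ⟨m, hmK, hm⟩ := hK.exists_isMinOn ⟨c₀, hc₀⟩ hg
  have hm_univ : ∀ c, g m ≤ g c := fun c => by
    by_cases hc : g c ≤ g c₀
    · exact hm (h c hc)
    · exact (hm hc₀).trans (le_of_not_ge hc)
  have hleast : IsLeast (g '' K) (g m) :=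
    ⟨Set.mem_image_of_mem g hmK, Set.forall_mem_image.2 fun c _ => hm_univ c⟩
  have hleast_range : IsLeast (Set.range g) (g m) :=
    ⟨Set.mem_range_self m, Set.forall_mem_range.2 hm_univ⟩
  rw [hleast.csInf_eq, iInf, hleast_range.csInf_eq]

theorem continuousAt_iInf_of_eventually_mem_isCompact {F : X → β → R}
    (hF : Continuous (Function.uncurry F)) {K : Set β} (hK : IsCompact K) {c₀ : β} (hc₀ : c₀ ∈ K)
    {x₀ : X} (h : ∀ᶠ x in 𝓝 x₀, ∀ c, F x c ≤ F x c₀ → c ∈ K) :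
    ContinuousAt (fun x => ⨅ c, F x c) x₀ := by
  refine (hK.continuous_sInf hF).continuousAt.congr ?_
  filter_upwards [h] with x hx
  exact (iInf_eq_sInf_image_of_isCompact hK (hF.uncurry_left x).continuousOn hc₀ hx).symm

end Infimum

theorem continuous_iSup_of_finite {X κ : Type*} [TopologicalSpace X] [Finite κ] {g : κ → X → ℝ}
    (hg : ∀ k, Continuous (g k)) : Continuous fun x => ⨆ k, g k x := by
  cases isEmpty_or_nonempty κ
  · simpa only [Real.iSup_of_isEmpty] using continuous_const
  · have := Fintype.ofFinite κ
    simp_rw [← Finset.sup'_univ_eq_ciSup]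
    exact Continuous.finset_sup'_apply _ fun k _ => hg k

section MaxTimes

variable {ι κ : Type*}

/-- The max-times linear combination of the vectors `b k` with coefficients `c k`. The entries of
`b` are not required to be nonnegative. -/
noncomputable def maxTimesComb (b : κ → ι → ℝ) (c : κ → ℝ≥0) (i : ι) : ℝ :=
  ⨆ k, (c k : ℝ) * b k i

variable [Fintype ι]

/-- The `ℓ¹`-error made in approximating `u` by the max-times combination of the `b k` with
coefficients `c`. -/
noncomputable def maxTimesError (b : κ → ι → ℝ) (u : ι → ℝ) (c : κ → ℝ≥0) : ℝ :=
  ∑ i, |u i - maxTimesComb b c i|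

/-- The `ℓ¹`-distance from `u` to the max-times span of the `b k`: the function `f_b` whose
integral max-stable PCA minimizes. -/
noncomputable def maxTimesDist (b : κ → ι → ℝ) (u : ι → ℝ) : ℝ :=
  ⨅ c : κ → ℝ≥0, maxTimesError b u c

theorem maxTimesError_zero (b : κ → ι → ℝ) (u : ι → ℝ) : maxTimesError b u 0 = ∑ i, |u i| := by
  simp [maxTimesError, maxTimesComb]

variable [Finite κ]

theorem continuous_maxTimesError :
    Continuous (Function.uncurry fun x : (κ → ι → ℝ) × (ι → ℝ) => maxTimesError x.1 x.2) := by
  refine continuous_finsetSum _ fun i _ => Continuous.abs (.sub (by fun_prop) ?_)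
  exact continuous_iSup_of_finite fun k => by fun_prop

theorem coeff_mul_le_of_maxTimesError_le {b : κ → ι → ℝ} {u : ι → ℝ} {c : κ → ℝ≥0}
    (hc : maxTimesError b u c ≤ maxTimesError b u 0) (k : κ) (i : ι) :
    (c k : ℝ) * b k i ≤ 2 * ∑ j, |u j| := by
  rw [maxTimesError_zero] at hc
  have hu : |u i| ≤ ∑ j, |u j| :=
    Finset.single_le_sum (f := fun j => |u j|) (fun j _ => abs_nonneg _) (Finset.mem_univ i)
  have herror : |u i - maxTimesComb b c i| ≤ maxTimesError b u c :=
    Finset.single_le_sum (f := fun j => |u j - maxTimesComb b c j|) (fun j _ => abs_nonneg _)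
      (Finset.mem_univ i)
  calc (c k : ℝ) * b k i ≤ maxTimesComb b c i :=
        le_ciSup (f := fun k => (c k : ℝ) * b k i) (Set.finite_range _).bddAbove k
    _ ≤ |u i| + |u i - maxTimesComb b c i| := by
        linarith [le_abs_self (u i), neg_abs_le (u i - maxTimesComb b c i)]
    _ ≤ 2 * ∑ j, |u j| := by linarith

theorem exists_eventually_coeff_le {b₀ : κ → ι → ℝ} (u₀ : ι → ℝ) {k : κ} {i : ι}
    (hb₀ : 0 < b₀ k i) :
    ∃ M : ℝ≥0, ∀ᶠ x in 𝓝 (b₀, u₀), ∀ c,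
      maxTimesError x.1 x.2 c ≤ maxTimesError x.1 x.2 0 → c k ≤ M := by
  set bound : (κ → ι → ℝ) × (ι → ℝ) → ℝ := fun x => 2 * (∑ j, |x.2 j|) / x.1 k i
  have hbound : ContinuousAt bound (b₀, u₀) :=
    ContinuousAt.div (by fun_prop) (by fun_prop) hb₀.ne'
  have hpos : ∀ᶠ x : (κ → ι → ℝ) × (ι → ℝ) in 𝓝 (b₀, u₀), 0 < x.1 k i :=
    Tendsto.eventually_const_lt hb₀ (Continuous.tendsto (by fun_prop) (b₀, u₀))
  refine ⟨(bound (b₀, u₀) + 1).toNNReal, ?_⟩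
  filter_upwards [hbound.eventually_lt_const (lt_add_one _), hpos] with x hx hxpos c hc
  have hcoeff : (c k : ℝ) ≤ bound x :=
    (le_div_iff₀ hxpos).2 (coeff_mul_le_of_maxTimesError_le hc k i)
  exact NNReal.le_toNNReal_of_coe_le (hcoeff.trans hx.le)

theorem continuousAt_maxTimesDist {b₀ : κ → ι → ℝ} (hb₀ : ∀ k, ∃ i, 0 < b₀ k i) (u₀ : ι → ℝ) :
    ContinuousAt (Function.uncurry (maxTimesDist (κ := κ))) (b₀, u₀) := by
  choose i hi using hb₀
  choose M hM using fun k => exists_eventually_coeff_le u₀ (hi k)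
  refine continuousAt_iInf_of_eventually_mem_isCompact continuous_maxTimesError
    (isCompact_Icc (a := (0 : κ → ℝ≥0)) (b := M)) (Set.left_mem_Icc.2 fun k => zero_le) ?_
  filter_upwards [eventually_all.2 hM] with x hx c hc
  exact ⟨fun k => zero_le, fun k => hx k c hc⟩

end MaxTimes

section WeakConvergence

variable {X α : Type*} [TopologicalSpace X] [MeasurableSpace X] {l : Filter α}
  {μ : α → FiniteMeasure X} {ν : FiniteMeasure X} {K : Set X}

theorem measure_compl_eq_zero_of_tendsto [HasOuterApproxClosed X] [OpensMeasurableSpace X]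
    [l.NeBot] (hK : IsClosed K) (hμ : ∀ a, (μ a : Measure X) Kᶜ = 0) (hlim : Tendsto μ l (𝓝 ν)) :
    (ν : Measure X) Kᶜ = 0 := by
  have hmass : Tendsto (fun a => (μ a : Measure X) K) l (𝓝 ((ν : Measure X) Set.univ)) := by
    have hμK : ∀ a, (μ a : Measure X) K = (μ a).mass := fun a => by
      rw [FiniteMeasure.ennreal_mass, measure_of_measure_compl_eq_zero (hμ a)]
    simp_rw [hμK, ← FiniteMeasure.ennreal_mass]
    exact ENNReal.tendsto_coe.2 hlim.mass
  rw [measure_compl hK.measurableSet (measure_ne_top _ K), tsub_eq_zero_iff_le, ← hmass.limsup_eq]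
  exact FiniteMeasure.limsup_measure_closed_le_of_tendsto hlim hK

theorem tendsto_setIntegral_of_continuousOn [NormalSpace X] [T2Space X] [OpensMeasurableSpace X]
    (hK : IsCompact K) (hμ : ∀ a, (μ a : Measure X) Kᶜ = 0) (hν : (ν : Measure X) Kᶜ = 0)
    (hlim : Tendsto μ l (𝓝 ν)) {g : X → ℝ} (hg : ContinuousOn g K) :
    Tendsto (fun a => ∫ x in K, g x ∂(μ a : Measure X)) l
      (𝓝 (∫ x in K, g x ∂(ν : Measure X))) := by
  have := isCompact_iff_compactSpace.1 hK
  obtain ⟨G, -, hG⟩ := BoundedContinuousFunction.exists_norm_eq_domRestrict_eq_of_closed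
    (.mkOfCompact ⟨K.domRestrict g, hg.domRestrict⟩) hK.isClosed
  have hGg : ∀ x ∈ K, g x = G x := fun x hx => (DFunLike.congr_fun hG ⟨x, hx⟩).symm
  have hint : ∀ ρ : FiniteMeasure X, (ρ : Measure X) Kᶜ = 0 →
      ∫ x in K, g x ∂(ρ : Measure X) = ∫ x, G x ∂(ρ : Measure X) := fun ρ hρ => by
    rw [setIntegral_congr_fun hK.isClosed.measurableSet hGg,
      Measure.restrict_eq_self_of_ae_mem (mem_ae_iff.2 hρ)]
  simp_rw [hint _ (hμ _), hint ν hν]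
  exact FiniteMeasure.tendsto_iff_forall_integral_tendsto.1 hlim G

theorem tendsto_setIntegral_of_tendstoUniformlyOn [NormalSpace X] [T2Space X]
    [OpensMeasurableSpace X] (hK : IsCompact K) (hμ : ∀ a, (μ a : Measure X) Kᶜ = 0)
    (hν : (ν : Measure X) Kᶜ = 0) (hlim : Tendsto μ l (𝓝 ν)) {F : α → X → ℝ} {g : X → ℝ}
    (hF : ∀ a, ContinuousOn (F a) K) (hg : ContinuousOn g K) (hFg : TendstoUniformlyOn F g l K) :
    Tendsto (fun a => ∫ x in K, F a x ∂(μ a : Measure X)) l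
      (𝓝 (∫ x in K, g x ∂(ν : Measure X))) := by
  suffices hdiff : Tendsto (fun a => ∫ x in K, F a x ∂(μ a : Measure X)
      - ∫ x in K, g x ∂(μ a : Measure X)) l (𝓝 0) by
    simpa only [sub_add_cancel, zero_add] using
      hdiff.add (tendsto_setIntegral_of_continuousOn hK hμ hν hlim hg)
  have hmass : ∀ᶠ a in l, (μ a : Measure X).real K ≤ ν.mass + 1 := by
    filter_upwards [hlim.mass.eventually_lt_const (lt_add_one ν.mass)] with a ha
    exact_mod_cast ((μ a).apply_le_mass K).trans ha.le
  refine Metric.tendsto_nhds.2 fun ε hε => ?_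
  obtain ⟨δ, hδ, hδε⟩ := exists_pos_mul_lt hε (ν.mass + 1 : ℝ)
  filter_upwards [Metric.tendstoUniformlyOn_iff.1 hFg δ hδ, hmass] with a hunif ha
  rw [dist_zero_right, ← integral_sub ((hF a).integrableOn_compact hK) (hg.integrableOn_compact hK)]
  calc ‖∫ x in K, F a x - g x ∂(μ a : Measure X)‖ ≤ δ * (μ a : Measure X).real K :=
        norm_setIntegral_le_of_norm_le_const (measure_lt_top _ K) fun x hx => by
          rw [← dist_eq_norm, dist_comm]
          exact (hunif x hx).le
    _ ≤ δ * (ν.mass + 1) := by gcongr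
    _ < ε := by rwa [mul_comm]

end WeakConvergence

theorem tendstoUniformlyOn_of_continuousOn_prod {X Y E α : Type*} [TopologicalSpace X]
    [TopologicalSpace Y] [UniformSpace E] {F : Y → X → E} {B : Set Y} {K : Set X}
    (hK : IsCompact K) (hF : ContinuousOn (Function.uncurry F) (B ×ˢ K)) {l : Filter α} {y : α → Y}
    {y₀ : Y} (hy : ∀ a, y a ∈ B) (hy₀ : y₀ ∈ B) (hlim : Tendsto y l (𝓝 y₀)) :
    TendstoUniformlyOn (fun a => F (y a)) (F y₀) l K := by
  intro V hV
  obtain ⟨W, hW, hWV⟩ := hK.mem_uniformity_of_prod hF hy₀ (symm_le_uniformity hV)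
  filter_upwards [tendsto_nhdsWithin_iff.2 ⟨hlim, .of_forall hy⟩ hW] with a ha
  exact hWV (y a) ha

section Sphere

/-- The nonnegative part of the unit sphere of the `ℓ^q` (quasi-)norm on `ι → ℝ`: the space `Ξ` on
which spectral measures live. -/
def nonnegSphere (ι : Type*) [Fintype ι] (q : ℝ) : Set (ι → ℝ) :=
  {u | (∀ i, 0 ≤ u i) ∧ (∑ i, u i ^ q) ^ (1 / q) = 1}

variable {ι : Type*} [Fintype ι] {q : ℝ}

theorem le_one_of_mem_nonnegSphere (hq : 0 < q) {u : ι → ℝ} (hu : u ∈ nonnegSphere ι q) (i : ι) :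
    u i ≤ 1 :=
  calc u i = (u i ^ q) ^ (1 / q) := by rw [one_div, Real.rpow_rpow_inv (hu.1 i) hq.ne']
    _ ≤ (∑ j, u j ^ q) ^ (1 / q) := by
        have hpow : ∀ j, 0 ≤ u j ^ q := fun j => Real.rpow_nonneg (hu.1 j) q
        refine Real.rpow_le_rpow (hpow i) ?_ (one_div_pos.2 hq).le
        exact Finset.single_le_sum (f := fun j => u j ^ q) (fun j _ => hpow j) (Finset.mem_univ i)
    _ = 1 := hu.2

theorem isCompact_nonnegSphere (hq : 0 < q) : IsCompact (nonnegSphere ι q) := by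
  have hsum : Continuous fun u : ι → ℝ => ∑ i, u i ^ q :=
    continuous_finsetSum _ fun i _ => (continuous_apply i).rpow_const fun _ => .inr hq.le
  have hnorm : Continuous fun u : ι → ℝ => (∑ i, u i ^ q) ^ (1 / q) :=
    hsum.rpow_const fun _ => .inr (one_div_pos.2 hq).le
  have hclosed : IsClosed (nonnegSphere ι q) :=
    (isClosed_le continuous_const continuous_id : IsClosed {u : ι → ℝ | 0 ≤ u}).inter
      (isClosed_singleton.preimage hnorm)
  exact (isCompact_Icc (a := (0 : ι → ℝ)) (b := 1)).of_isClosed_subset hclosed fun u hu =>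
    ⟨hu.1, le_one_of_mem_nonnegSphere hq hu⟩

theorem exists_pos_of_mem_nonnegSphere (hq : 0 < q) {u : ι → ℝ} (hu : u ∈ nonnegSphere ι q) :
    ∃ i, 0 < u i := by
  by_contra! hnonpos
  have hzero : ∀ i, u i = 0 := fun i => (hnonpos i).antisymm (hu.1 i)
  simpa [hzero, Real.zero_rpow, hq.ne'] using hu.2

end Sphere

theorem stmt_17_general {ι κ α : Type*} [Fintype ι] [Finite κ] {K : Set (ι → ℝ)}
    (hK : IsCompact K) (hpos : ∀ u ∈ K, ∃ i, 0 < u i) {l : Filter α} [l.NeBot]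
    {μ : α → FiniteMeasure (ι → ℝ)} {ν : FiniteMeasure (ι → ℝ)}
    (hμ : ∀ a, (μ a : Measure (ι → ℝ)) Kᶜ = 0) (hμν : Tendsto μ l (𝓝 ν))
    {b : α → κ → ι → ℝ} (hb : ∀ a k, b a k ∈ K)
    (hmin : ∀ a, IsMinOn (fun b' => ∫ u in K, maxTimesDist b' u ∂(μ a : Measure (ι → ℝ)))
      {b' | ∀ k, b' k ∈ K} (b a))
    {b₀ : κ → ι → ℝ} (hb₀ : ∀ k, b₀ k ∈ K) (hlim : Tendsto b l (𝓝 b₀)) :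
    IsMinOn (fun b' => ∫ u in K, maxTimesDist b' u ∂(ν : Measure (ι → ℝ)))
      {b' | ∀ k, b' k ∈ K} b₀ ∧
    Tendsto (fun a => ∫ u in K, maxTimesDist (b a) u ∂(μ a : Measure (ι → ℝ))) l
      (𝓝 (∫ u in K, maxTimesDist b₀ u ∂(ν : Measure (ι → ℝ)))) := by
  set B : Set (κ → ι → ℝ) := {b' | ∀ k, b' k ∈ K}
  have hν : (ν : Measure (ι → ℝ)) Kᶜ = 0 := measure_compl_eq_zero_of_tendsto hK.isClosed hμ hμν
  have hcont : ContinuousOn (Function.uncurry (maxTimesDist (ι := ι) (κ := κ))) (B ×ˢ K) :=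
    fun x hx => (continuousAt_maxTimesDist (fun k => hpos _ (hx.1 k)) x.2).continuousWithinAt
  have hcont_right : ∀ b' ∈ B, ContinuousOn (maxTimesDist b') K := fun b' hb' =>
    hcont.uncurry_left b' hb'
  have htendsto : ∀ {y : α → κ → ι → ℝ} {y₀}, (∀ a, y a ∈ B) → y₀ ∈ B → Tendsto y l (𝓝 y₀) →
      Tendsto (fun a => ∫ u in K, maxTimesDist (y a) u ∂(μ a : Measure (ι → ℝ))) l
        (𝓝 (∫ u in K, maxTimesDist y₀ u ∂(ν : Measure (ι → ℝ)))) := fun hy hy₀ hlimy =>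
    tendsto_setIntegral_of_tendstoUniformlyOn hK hμ hν hμν (fun a => hcont_right _ (hy a))
      (hcont_right _ hy₀) (tendstoUniformlyOn_of_continuousOn_prod hK hcont hy hy₀ hlimy)
  refine ⟨fun b' hb' => ?_, htendsto hb hb₀ hlim⟩
  exact le_of_tendsto_of_tendsto' (htendsto hb hb₀ hlim)
    (htendsto (fun _ => hb') hb' tendsto_const_nhds) fun a => hmin a hb'

/-- Stability of the max-stable PCA under weak convergence of spectral measures:
if `Sₙ → S` weakly (all supported on the spectral sphere `Ξ`), `bₙ` minimizes
`b ↦ ∫_Ξ f_b dSₙ` over `B = Ξ^p`, and a subsequence `b_{n_i}` converges to `b_∞ ∈ B`,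
then `b_∞` minimizes `b ↦ ∫_Ξ f_b dS` over `B` and
`∫_Ξ f_{b_{n_i}} dS_{n_i} → ∫_Ξ f_{b_∞} dS`. -/
theorem stmt_17 (d p : ℕ) (hd : 0 < d) (hp : 0 < p) (q : ℝ) (hq : 1 ≤ q)
    (Ξ : Set (Fin d → ℝ))
    (hΞ : Ξ = {u | (∀ i, 0 ≤ u i) ∧ (∑ i, u i ^ q) ^ (1 / q) = 1})
    (f : (Fin p → Fin d → ℝ) → (Fin d → ℝ) → ℝ)
    (hf : ∀ b u, f b u = ⨅ c : Fin p → ℝ≥0, ∑ i, |u i - ⨆ k, (c k : ℝ) * b k i|)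
    (B : Set (Fin p → Fin d → ℝ)) (hB : B = {b | ∀ k, b k ∈ Ξ})
    (Sn : ℕ → FiniteMeasure (Fin d → ℝ)) (S : FiniteMeasure (Fin d → ℝ))
    (hsuppn : ∀ n, (Sn n : Measure (Fin d → ℝ)) Ξᶜ = 0)
    (hsupp : (S : Measure (Fin d → ℝ)) Ξᶜ = 0)
    (hweak : Tendsto Sn atTop (𝓝 S))
    (bn : ℕ → (Fin p → Fin d → ℝ)) (hbn : ∀ n, bn n ∈ B)
    (hmin : ∀ n, ∀ b ∈ B,
      ∫ u in Ξ, f (bn n) u ∂(Sn n : Measure (Fin d → ℝ))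
        ≤ ∫ u in Ξ, f b u ∂(Sn n : Measure (Fin d → ℝ)))
    (φ : ℕ → ℕ) (hφ : StrictMono φ)
    (binf : Fin p → Fin d → ℝ) (hbinf : binf ∈ B)
    (hconv : Tendsto (fun i => bn (φ i)) atTop (𝓝 binf)) :
    (∀ b ∈ B, ∫ u in Ξ, f binf u ∂(S : Measure (Fin d → ℝ))
        ≤ ∫ u in Ξ, f b u ∂(S : Measure (Fin d → ℝ))) ∧
    Tendsto (fun i => ∫ u in Ξ, f (bn (φ i)) u ∂(Sn (φ i) : Measure (Fin d → ℝ)))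
      atTop (𝓝 (∫ u in Ξ, f binf u ∂(S : Measure (Fin d → ℝ)))) := by
  have hq₀ : 0 < q := zero_lt_one.trans_le hq
  obtain rfl : f = maxTimesDist := funext₂ hf
  subst hΞ hB
  exact stmt_17_general (isCompact_nonnegSphere hq₀) (fun _ => exists_pos_of_mem_nonnegSphere hq₀)
    (fun i => hsuppn (φ i)) (hweak.comp hφ.tendsto_atTop) (fun i => hbn (φ i))
    (fun i => isMinOn_iff.2 (hmin (φ i))) hbinf hconv
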